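/- Let q be an odd prime power, F a finite field with q elements, n ≥ 2 with (n,q) ≠ (2,3), and W a submodule of Fⁿ with Module.finrank F W = m where 0 < m < n. Let H be the stabilizer of W in SL(n,F) (the subgroup {A : Submodule.map (Matrix.toLin' A) W = W}) and let H̄ be the image of H in PSLₙ(F) = SL(n,F)/center under the quotient map. Then H̄ is a maximal subgroup of PSLₙ(F) of odd index if and only if every binary digit of m is at most the corresponding binary digit of n (∀ i, Nat.testBit m i = true → Nat.testBit n i = true). -/

import Mathlib

/-- The stabilizer in `SL(n, F)` of a submodule `W` of `Fⁿ`, consisting of those special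
linear matrices `A` with `Submodule.map (Matrix.toLin' A) W = W`. -/
def slSubspaceStabilizer (F : Type*) [Field F] (n : ℕ) (W : Submodule F (Fin n → F)) :
    Subgroup (Matrix.SpecialLinearGroup (Fin n) F) where
  carrier := {A | Submodule.map (Matrix.toLin' (A : Matrix (Fin n) (Fin n) F)) W = W}
  one_mem' := by
    simp [Matrix.SpecialLinearGroup.coe_one, Matrix.toLin'_one]
  mul_mem' := by
    intro A B hA hB
    simp only [Set.mem_setOf_eq] at *
    rw [Matrix.SpecialLinearGroup.coe_mul, Matrix.toLin'_mul, Submodule.map_comp, hB, hA]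
  inv_mem' := by
    intro A hA
    simp only [Set.mem_setOf_eq] at *
    have h1 : ((A⁻¹ : Matrix.SpecialLinearGroup (Fin n) F) : Matrix (Fin n) (Fin n) F) *
        (A : Matrix (Fin n) (Fin n) F) = 1 := by
      rw [← Matrix.SpecialLinearGroup.coe_mul, inv_mul_cancel,
        Matrix.SpecialLinearGroup.coe_one]
    conv_lhs => rw [← hA]
    rw [← Submodule.map_comp, ← Matrix.toLin'_mul, h1, Matrix.toLin'_one, Submodule.map_id]

/-!
Two vectors `v`, `x` outside a subspace `p` both have nonzero value under some linear form vanishing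
on `p`, so some transvection fixes `p` pointwise and carries `v` to a multiple of `x`.
With `p = W`, this shows that a subgroup properly containing the stabilizer of `W` contains every
transvection; with `p = W ⊓ U`, it shows by induction on the codimension of `W ⊓ U` that such a
subgroup moves `W` to any `U` of the same dimension. Hence the stabilizer is maximal, and its index
is the number of `m`-dimensional subspaces of `Fⁿ`.

The `2`-group of sign changes of coordinates acts on these subspaces, and in odd characteristic its
fixed points are the spans of `m` standard basis vectors. The index is therefore congruent to
`n.choose m` modulo `2`, and Lucas' theorem gives the condition on binary digits.
-/

theorem isCoatom_map_of_ker_le {G G' : Type*} [Group G] [Group G'] {φ : G →* G'}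
    (hφ : Function.Surjective φ) {H : Subgroup G} (hker : φ.ker ≤ H) (hH : IsCoatom H) :
    IsCoatom (H.map φ) := by
  have hcomap : (H.map φ).comap φ = H := Subgroup.comap_map_eq_self hker
  refine hH.imp (fun hne htop ↦ hne ?_) fun hmax K hK ↦ Subgroup.comap_injective hφ ?_
  · rw [Subgroup.comap_top]
    refine hmax _ ?_
    rwa [← Subgroup.comap_lt_comap_of_surjective hφ, hcomap] at hK
  · rw [← hcomap, htop, Subgroup.comap_top]

theorem odd_choose_iff_forall_testBit (n k : ℕ) :
    Odd (n.choose k) ↔ ∀ i, k.testBit i = true → n.testBit i = true := by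
  have hn : n < 2 ^ (n + k) :=
    Nat.lt_two_pow_self.trans_le (Nat.pow_le_pow_right two_pos (n.le_add_right k))
  have hk : k < 2 ^ (n + k) :=
    Nat.lt_two_pow_self.trans_le (Nat.pow_le_pow_right two_pos (k.le_add_left n))
  have hdigit (i : ℕ) : Odd ((n / 2 ^ i % 2).choose (k / 2 ^ i % 2)) ↔
      (k.testBit i = true → n.testBit i = true) := by
    rw [Nat.testBit_eq_decide_div_mod_eq, Nat.testBit_eq_decide_div_mod_eq]
    rcases Nat.mod_two_eq_zero_or_one (n / 2 ^ i) with h | h <;>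
      rcases Nat.mod_two_eq_zero_or_one (k / 2 ^ i) with h' | h' <;> simp [h, h']
  have hmod := Choose.choose_modEq_prod_range_choose_nat (p := 2) hn hk
  rw [Nat.odd_iff, hmod, ← Nat.odd_iff, ← Nat.coprime_two_left, Nat.coprime_prod_right_iff]
  simp only [Nat.coprime_two_left, hdigit, Finset.mem_range]
  refine ⟨fun h i hi ↦ h i ?_ hi, fun h i _ ↦ h i⟩
  by_contra! hle
  rw [Nat.testBit_lt_two_pow (hk.trans_le (Nat.pow_le_pow_right two_pos hle))] at hi
  contradiction

theorem two_ne_zero_of_odd_card {F : Type*} [Field F] [Fintype F] (h : Odd (Fintype.card F)) :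
    (2 : F) ≠ 0 :=
  Ring.two_ne_zero fun hchar ↦
    Nat.not_even_iff_odd.mpr h (Nat.even_iff.mpr (FiniteField.even_card_of_char_two hchar))

section LinearAction

open Module
open scoped Pointwise

variable {G : Type*} [Group G]

section Semiring

variable {R M : Type*} [Semiring R] [AddCommMonoid M] [Module R M] [DistribMulAction G M]
  [SMulCommClass G R M]

theorem finrank_smul_submodule (g : G) (W : Submodule R M) : finrank R ↥(g • W) = finrank R W :=
  LinearEquiv.finrank_map_eq (DistribMulAction.toLinearEquiv R M g) W

instance finite_smul_submodule (g : G) (W : Submodule R M) [Module.Finite R W] :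
    Module.Finite R ↥(g • W) :=
  Module.Finite.map W (DistribSMul.toLinearMap R M g)

/-- The submodules of rank `m`, as a set stable under a group acting linearly on the module. -/
def submodulesOfFinrank (G R M : Type*) [Group G] [Semiring R] [AddCommMonoid M]
    [Module R M] [DistribMulAction G M] [SMulCommClass G R M] (m : ℕ) :
    SubMulAction G (Submodule R M) where
  carrier := {U | finrank R U = m}
  smul_mem' g U hU := (finrank_smul_submodule g U).trans hU

end Semiring

theorem mem_stabilizer_submodule_iff {F V : Type*} [Field F] [AddCommGroup V] [Module F V]
    [DistribMulAction G V] [SMulCommClass G F V] {g : G} {W : Submodule F V}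
    [FiniteDimensional F W] : g ∈ MulAction.stabilizer G W ↔ ∀ w ∈ W, g • w ∈ W := by
  have hle : g • W ≤ W ↔ ∀ w ∈ W, g • w ∈ W := Submodule.map_le_iff_le_comap
  rw [MulAction.mem_stabilizer_iff, ← hle]
  exact ⟨le_of_eq, fun h ↦ Submodule.eq_of_le_of_finrank_eq h (finrank_smul_submodule g W)⟩

end LinearAction

section Transvections

open Module
open scoped Pointwise

variable {F V : Type*} [Field F] [AddCommGroup V] [Module F V]

/-- The transvection `x ↦ x + f x • v`, for `f v = 0`, as an element of the special linear group of
`V`, the group through which transvections act on the subspaces of `V`. -/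
def slTransvection {f : Dual F V} {v : V} (h : f v = 0) : SpecialLinearGroup F V :=
  ⟨LinearEquiv.transvection h, LinearEquiv.transvection.det_eq_one h⟩

theorem slTransvection_smul {f : Dual F V} {v : V} (h : f v = 0) (x : V) :
    slTransvection h • x = x + f x • v :=
  LinearEquiv.transvection.apply h x

theorem slTransvection_smul_of_mem_ker {f : Dual F V} {v x : V} (h : f v = 0)
    (hx : x ∈ LinearMap.ker f) : slTransvection h • x = x := by
  rw [slTransvection_smul, LinearMap.mem_ker.mp hx, zero_smul, add_zero]

theorem conj_slTransvection (g : SpecialLinearGroup F V) {f : Dual F V} {v : V}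
    (h : f (g • v) = 0) :
    g * slTransvection (f := f ∘ₗ (g : V →ₗ[F] V)) h * g⁻¹ = slTransvection h := by
  refine mul_inv_eq_of_eq_mul (SpecialLinearGroup.ext _ _ fun x ↦ ?_)
  change g • (x + f (g • x) • v) = g • x + f (g • x) • g • v
  rw [smul_add, smul_comm]

theorem exists_dual_apply_ne_zero_of_notMem {p : Submodule F V} {v x : V} (hv : v ∉ p)
    (hx : x ∉ p) : ∃ f : Dual F V, p ≤ LinearMap.ker f ∧ f v ≠ 0 ∧ f x ≠ 0 := by
  obtain ⟨f, hfv, hf⟩ := p.exists_le_ker_of_notMem hv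
  obtain ⟨g, hgx, hg⟩ := p.exists_le_ker_of_notMem hx
  by_cases hfx : f x = 0
  · by_cases hgv : g v = 0
    · refine ⟨f + g, fun y hy ↦ ?_, by simpa [hgv], by simpa [hfx]⟩
      simp [LinearMap.mem_ker.mp (hf hy), LinearMap.mem_ker.mp (hg hy)]
    · exact ⟨g, hg, hgv, hgx⟩
  · exact ⟨f, hf, hfv, hfx⟩

theorem exists_slTransvection_smul_eq {p : Submodule F V} {v x : V} (hv : v ∉ p) (hx : x ∉ p) :
    ∃ (f : Dual F V) (u : V) (h : f u = 0), p ≤ LinearMap.ker f ∧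
      ∃ a : F, a ≠ 0 ∧ slTransvection h • v = a • x := by
  obtain ⟨f, hf, hfv, hfx⟩ := exists_dual_apply_ne_zero_of_notMem hv hx
  refine ⟨(f v)⁻¹ • f, (f v / f x) • x - v, ?_, fun y hy ↦ ?_, f v / f x, div_ne_zero hfv hfx, ?_⟩
  · simp [hfx]
  · simp [LinearMap.mem_ker.mp (hf hy)]
  · simp [slTransvection_smul, hfv]

theorem slTransvection_mem_of_stabilizer_lt {W : Submodule F V} [FiniteDimensional F W]
    {K : Subgroup (SpecialLinearGroup F V)}
    (hK : MulAction.stabilizer (SpecialLinearGroup F V) W < K) {f : Dual F V} {v : V}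
    (h : f v = 0) : slTransvection h ∈ K := by
  have mem_of_mem {f : Dual F V} {w : V} (h : f w = 0) (hw : w ∈ W) : slTransvection h ∈ K :=
    hK.le <| mem_stabilizer_submodule_iff.mpr fun x hx ↦ by
      rw [slTransvection_smul]
      exact W.add_mem hx (W.smul_mem _ hw)
  by_cases hv : v ∈ W
  · exact mem_of_mem h hv
  obtain ⟨g, hgK, hg⟩ := SetLike.exists_of_lt hK
  obtain ⟨w, hw, hgw⟩ : ∃ w ∈ W, g • w ∉ W := by
    simpa only [mem_stabilizer_submodule_iff, not_forall, exists_prop] using hg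
  obtain ⟨e, u, hu, he, a, ha, hgv⟩ := exists_slTransvection_smul_eq hgw hv
  have hs : slTransvection hu ∈ MulAction.stabilizer (SpecialLinearGroup F V) W :=
    mem_stabilizer_submodule_iff.mpr fun x hx ↦ by
      rwa [slTransvection_smul_of_mem_ker hu (he hx)]
  obtain ⟨k, hkK, hk⟩ : ∃ k ∈ K, k • a⁻¹ • w = v :=
    ⟨_, K.mul_mem (hK.le hs) hgK, by
      rw [smul_comm, mul_smul, hgv, inv_smul_smul₀ ha]⟩
  subst hk
  rw [← conj_slTransvection]
  exact K.mul_mem (K.mul_mem hkK (mem_of_mem _ (W.smul_mem _ hw))) (K.inv_mem hkK)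

theorem exists_mem_smul_eq_of_finrank_eq {K : Subgroup (SpecialLinearGroup F V)}
    (hK : ∀ {f : Dual F V} {v : V} (h : f v = 0), slTransvection h ∈ K) {U : Submodule F V}
    [FiniteDimensional F U] (W : Submodule F V) [FiniteDimensional F W]
    (hWU : finrank F W = finrank F U) : ∃ k ∈ K, k • W = U := by
  induction hd : finrank F U - finrank F ↥(W ⊓ U) using Nat.strong_induction_on
    generalizing W with | _ d ih =>
  by_cases hle : W ≤ U
  · exact ⟨1, K.one_mem, by rw [one_smul, Submodule.eq_of_le_of_finrank_eq hle hWU]⟩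
  have hUW : ¬U ≤ W := fun h ↦ hle (Submodule.eq_of_le_of_finrank_eq h hWU.symm).ge
  obtain ⟨w, hw, hwU⟩ := SetLike.not_le_iff_exists.mp hle
  obtain ⟨u, hu, huW⟩ := SetLike.not_le_iff_exists.mp hUW
  obtain ⟨f, v, h, hf, a, ha, hwu⟩ := exists_slTransvection_smul_eq (p := W ⊓ U)
    (fun h ↦ hwU h.2) (fun h ↦ huW h.1)
  set t := slTransvection h
  have hlt : W ⊓ U < (t • W) ⊓ U := by
    have hut : u ∈ t • W := by
      rw [← inv_smul_smul₀ ha u, ← hwu]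
      exact Submodule.smul_mem _ _ (Submodule.smul_mem_pointwise_smul _ _ _ hw)
    refine lt_of_le_not_ge (fun x hx ↦ ⟨?_, hx.2⟩) fun hge ↦ huW (hge ⟨hut, hu⟩).1
    rw [← slTransvection_smul_of_mem_ker h (hf hx)]
    exact Submodule.smul_mem_pointwise_smul _ _ _ hx.1
  have hdec : finrank F U - finrank F ↥((t • W) ⊓ U) < d := by
    have hlt_rank := Submodule.finrank_lt_finrank_of_lt hlt
    have hle_rank := Submodule.finrank_mono (inf_le_right : (t • W) ⊓ U ≤ U)
    omega
  obtain ⟨k, hk, hkW⟩ := ih _ hdec (t • W) ((finrank_smul_submodule t W).trans hWU) rfl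
  exact ⟨k * t, K.mul_mem hk (hK h), by rw [mul_smul, hkW]⟩

theorem orbit_submodule_eq (W : Submodule F V) [FiniteDimensional F V] :
    MulAction.orbit (SpecialLinearGroup F V) W =
      {U : Submodule F V | finrank F U = finrank F W} := by
  ext U
  constructor
  · rintro ⟨g, rfl⟩
    exact finrank_smul_submodule g W
  · intro hU
    obtain ⟨k, -, hk⟩ := exists_mem_smul_eq_of_finrank_eq (K := ⊤) (fun _ ↦ Subgroup.mem_top _)
      W (Eq.symm hU)
    exact ⟨k, hk⟩

theorem stabilizer_submodule_ne_top {W : Submodule F V} (hbot : W ≠ ⊥) (htop : W ≠ ⊤) :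
    MulAction.stabilizer (SpecialLinearGroup F V) W ≠ ⊤ := by
  obtain ⟨w, hw, hw0⟩ := W.exists_mem_ne_zero_of_ne_bot hbot
  obtain ⟨v, -, hv⟩ := SetLike.exists_of_lt htop.lt_top
  have hw_bot : w ∉ (⊥ : Submodule F V) := mt (Submodule.mem_bot F).mp hw0
  have hv_bot : v ∉ (⊥ : Submodule F V) := fun h ↦ hv ((bot_le : ⊥ ≤ W) h)
  obtain ⟨f, u, h, -, a, ha, hwv⟩ := exists_slTransvection_smul_eq hw_bot hv_bot
  intro hstab
  have hW : slTransvection h • W = W :=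
    MulAction.mem_stabilizer_iff.mp (hstab ▸ Subgroup.mem_top (slTransvection h))
  have hmem : a • v ∈ W := by
    rw [← hwv, ← hW]
    exact Submodule.smul_mem_pointwise_smul _ _ _ hw
  exact hv ((W.smul_mem_iff ha).mp hmem)

theorem isCoatom_stabilizer_submodule {W : Submodule F V} [FiniteDimensional F W]
    (hbot : W ≠ ⊥) (htop : W ≠ ⊤) :
    IsCoatom (MulAction.stabilizer (SpecialLinearGroup F V) W) := by
  refine ⟨stabilizer_submodule_ne_top hbot htop, fun K hK ↦ K.eq_top_iff'.mpr fun g ↦ ?_⟩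
  obtain ⟨k, hk, hkW⟩ := exists_mem_smul_eq_of_finrank_eq
    (slTransvection_mem_of_stabilizer_lt hK) W (finrank_smul_submodule g W).symm
  have hkg : k⁻¹ * g ∈ MulAction.stabilizer (SpecialLinearGroup F V) W := by
    rw [MulAction.mem_stabilizer_iff, mul_smul, ← hkW, inv_smul_smul]
  simpa using K.mul_mem hk (hK.le hkg)

end Transvections

section SignAction

open Module
open scoped Pointwise

variable {F ι : Type*} [Field F]

/-- The span of the standard basis vectors of `F^ι` indexed by `s`. In characteristic
other than `2`, these are the subspaces fixed by all sign changes of coordinates. -/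
def coordinateSubspace (F : Type*) [Field F] {ι : Type*} [Finite ι] (s : Finset ι) :
    Submodule F (ι → F) :=
  Submodule.span F (Pi.basisFun F ι '' s)

theorem mem_coordinateSubspace_iff [Finite ι] {s : Finset ι} {x : ι → F} :
    x ∈ coordinateSubspace F s ↔ ∀ i, x i ≠ 0 → i ∈ s := by
  simp [coordinateSubspace, Basis.mem_span_image, Set.subset_def]

theorem coordinateSubspace_le_iff [Finite ι] [DecidableEq ι] {s : Finset ι}
    {U : Submodule F (ι → F)} :
    coordinateSubspace F s ≤ U ↔ ∀ i ∈ s, Pi.single i 1 ∈ U := by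
  simp [coordinateSubspace, Submodule.span_le, Set.subset_def]

theorem finrank_coordinateSubspace [Finite ι] (s : Finset ι) :
    finrank F (coordinateSubspace F s) = s.card := by
  rw [coordinateSubspace, Set.image_eq_range, finrank_span_eq_card]
  · exact Fintype.card_coe s
  · exact (Pi.basisFun F ι).linearIndependent.comp _ Subtype.val_injective

theorem coordinateSubspace_injective [Finite ι] :
    Function.Injective (coordinateSubspace F : Finset ι → Submodule F (ι → F)) := by
  classical
  intro s t h
  ext i
  simpa [mem_coordinateSubspace_iff, Pi.single_apply] using SetLike.ext_iff.mp h (Pi.single i 1)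

theorem signVector_smulCommClass : SMulCommClass (ι → ℤˣ) F (ι → F) :=
  .symm F (ι → ℤˣ) (ι → F)

attribute [local instance] signVector_smulCommClass

theorem signVector_smul_coordinateSubspace [Finite ι] (ε : ι → ℤˣ) (s : Finset ι) :
    ε • coordinateSubspace F s = coordinateSubspace F s := by
  ext x
  rw [← Submodule.mem_toAddSubgroup, Submodule.pointwise_smul_toAddSubgroup,
    AddSubgroup.mem_pointwise_smul_iff_inv_smul_mem, Submodule.mem_toAddSubgroup]
  simp [mem_coordinateSubspace_iff, smul_eq_zero_iff_eq]

theorem single_mem_of_forall_signVector_smul_eq [DecidableEq ι] (h2 : (2 : F) ≠ 0)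
    {U : Submodule F (ι → F)} (hU : ∀ ε : ι → ℤˣ, ε • U = U) {x : ι → F} (hx : x ∈ U) {i : ι}
    (hi : x i ≠ 0) : Pi.single i 1 ∈ U := by
  set ε : ι → ℤˣ := Function.update 1 i (-1) with hε
  have hεx : ε • x ∈ U := hU ε ▸ Submodule.smul_mem_pointwise_smul x ε U hx
  have hsub : x - ε • x = (2 * x i) • Pi.single i 1 := by
    ext j
    rcases eq_or_ne j i with rfl | hj
    · simp [hε, two_mul]
    · simp [hε, hj]
  rw [← U.smul_mem_iff (mul_ne_zero h2 hi), ← hsub]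
  exact U.sub_mem hx hεx

theorem forall_signVector_smul_eq_iff [Finite ι] (h2 : (2 : F) ≠ 0) {U : Submodule F (ι → F)} :
    (∀ ε : ι → ℤˣ, ε • U = U) ↔ ∃ s, coordinateSubspace F s = U := by
  classical
  have := Fintype.ofFinite ι
  refine ⟨fun hU ↦ ⟨({i | ∃ x ∈ U, x i ≠ 0} : Finset ι), le_antisymm ?_ fun x hx ↦ ?_⟩, ?_⟩
  · simp only [coordinateSubspace_le_iff, Finset.mem_filter_univ]
    rintro i ⟨x, hx, hi⟩
    exact single_mem_of_forall_signVector_smul_eq h2 hU hx hi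
  · simp only [mem_coordinateSubspace_iff, Finset.mem_filter_univ]
    exact fun i hi ↦ ⟨x, hx, hi⟩
  · rintro ⟨s, rfl⟩ ε
    exact signVector_smul_coordinateSubspace ε s

theorem card_fixedPoints_submodulesOfFinrank [Fintype ι] (h2 : (2 : F) ≠ 0) (m : ℕ) :
    Nat.card (MulAction.fixedPoints (ι → ℤˣ) (submodulesOfFinrank (ι → ℤˣ) F (ι → F) m)) =
      (Fintype.card ι).choose m := by
  classical
  rw [← Fintype.card_finset_len, ← Nat.card_eq_fintype_card]
  refine (Nat.card_eq_of_bijective (fun s : {s : Finset ι // s.card = m} ↦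
    ⟨⟨coordinateSubspace F s.1, (finrank_coordinateSubspace s.1).trans s.2⟩, fun ε ↦
      Subtype.ext (signVector_smul_coordinateSubspace ε s.1)⟩) ⟨fun s t h ↦ ?_, ?_⟩).symm
  · exact Subtype.ext (coordinateSubspace_injective (congrArg (fun U ↦ U.1.1) h))
  · rintro ⟨⟨U, hUm⟩, hU⟩
    obtain ⟨s, rfl⟩ := (forall_signVector_smul_eq_iff h2).mp fun ε ↦ congrArg Subtype.val (hU ε)
    exact ⟨⟨s, (finrank_coordinateSubspace s).symm.trans hUm⟩, rfl⟩

theorem ncard_finrank_eq_modEq_choose [Fintype ι] [Finite F] (h2 : (2 : F) ≠ 0) (m : ℕ) :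
    {U : Submodule F (ι → F) | finrank F U = m}.ncard ≡ (Fintype.card ι).choose m [MOD 2] := by
  have hG : IsPGroup 2 (ι → ℤˣ) := IsPGroup.of_card (n := Fintype.card ι) <| by
    rw [Nat.card_fun, Nat.card_eq_fintype_card, Nat.card_eq_fintype_card, Fintype.card_units_int]
  rw [← card_fixedPoints_submodulesOfFinrank h2]
  exact hG.card_modEq_card_fixedPoints (submodulesOfFinrank (ι → ℤˣ) F (ι → F) m)

end SignAction

section SubspaceStabilizer

open Module
open scoped Pointwise

variable {F : Type*} [Field F] {n : ℕ}

theorem slSubspaceStabilizer_eq_comap (W : Submodule F (Fin n → F)) :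
    slSubspaceStabilizer F n W =
      (MulAction.stabilizer (SpecialLinearGroup F (Fin n → F)) W).comap
        (Matrix.SpecialLinearGroup.toLin'_equiv :
          Matrix.SpecialLinearGroup (Fin n) F ≃* SpecialLinearGroup F (Fin n → F)) :=
  rfl

theorem isCoatom_slSubspaceStabilizer {W : Submodule F (Fin n → F)} (hbot : W ≠ ⊥)
    (htop : W ≠ ⊤) : IsCoatom (slSubspaceStabilizer F n W) := by
  rw [slSubspaceStabilizer_eq_comap, Subgroup.isCoatom_comap]
  exact isCoatom_stabilizer_submodule hbot htop

theorem index_slSubspaceStabilizer (W : Submodule F (Fin n → F)) :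
    (slSubspaceStabilizer F n W).index =
      {U : Submodule F (Fin n → F) | finrank F U = finrank F W}.ncard := by
  rw [slSubspaceStabilizer_eq_comap, ← orbit_submodule_eq, ← MulAction.index_stabilizer]
  exact Subgroup.index_comap_of_surjective _ (MulEquiv.surjective _)

theorem center_le_slSubspaceStabilizer (W : Submodule F (Fin n → F)) :
    Subgroup.center (Matrix.SpecialLinearGroup (Fin n) F) ≤ slSubspaceStabilizer F n W := by
  intro A hA
  obtain ⟨r, -, hr⟩ := Matrix.SpecialLinearGroup.mem_center_iff.mp hA
  rw [slSubspaceStabilizer_eq_comap, Subgroup.mem_comap, mem_stabilizer_submodule_iff]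
  intro w hw
  change Matrix.toLin' (A : Matrix (Fin n) (Fin n) F) w ∈ W
  rw [← hr, Matrix.toLin'_apply, Matrix.scalar_apply, ← Matrix.smul_one_eq_diagonal,
    Matrix.smul_mulVec, Matrix.one_mulVec]
  exact W.smul_mem r hw

end SubspaceStabilizer

/-- for `q` an odd prime power, `|F| = q`, `n ≥ 2`, `(n, q) ≠ (2, 3)`, and `W`
an `m`-dimensional subspace of `Fⁿ` with `0 < m < n`, the image in `PSLₙ(F)` of the
stabilizer of `W` in `SL(n, F)` is a maximal subgroup of odd index iff every binary digit
of `m` is at most the corresponding binary digit of `n`. -/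
theorem psl_subspace_stabilizer_maximal_odd_index_iff (q : ℕ) (hq_odd : Odd q)
    (hq_pp : IsPrimePow q) (F : Type) [Field F] [Fintype F] (hF : Fintype.card F = q)
    (n : ℕ) (hn : 2 ≤ n) (hnq : ¬(n = 2 ∧ q = 3))
    (W : Submodule F (Fin n → F)) (m : ℕ) (hm : Module.finrank F W = m)
    (hm0 : 0 < m) (hmn : m < n) :
    (IsCoatom (Subgroup.map
        (QuotientGroup.mk' (Subgroup.center (Matrix.SpecialLinearGroup (Fin n) F)))
        (slSubspaceStabilizer F n W)) ∧
      Odd (Subgroup.map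
        (QuotientGroup.mk' (Subgroup.center (Matrix.SpecialLinearGroup (Fin n) F)))
        (slSubspaceStabilizer F n W)).index) ↔
      ∀ i, Nat.testBit m i = true → Nat.testBit n i = true := by
  have h2 : (2 : F) ≠ 0 := two_ne_zero_of_odd_card (hF ▸ hq_odd)
  have hbot : W ≠ ⊥ := by
    rintro rfl
    rw [finrank_bot] at hm
    exact hm0.ne hm
  have htop : W ≠ ⊤ := by
    rintro rfl
    rw [finrank_top, Module.finrank_fin_fun] at hm
    exact hmn.ne' hm
  set φ := QuotientGroup.mk' (Subgroup.center (Matrix.SpecialLinearGroup (Fin n) F))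
  have hφ : Function.Surjective φ := QuotientGroup.mk'_surjective _
  have hker : φ.ker ≤ slSubspaceStabilizer F n W :=
    (QuotientGroup.ker_mk' _).trans_le (center_le_slSubspaceStabilizer W)
  have hmod : (slSubspaceStabilizer F n W).index ≡ n.choose m [MOD 2] := by
    simpa only [index_slSubspaceStabilizer, hm, Fintype.card_fin]
      using ncard_finrank_eq_modEq_choose (ι := Fin n) h2 m
  rw [and_iff_right (isCoatom_map_of_ker_le hφ hker (isCoatom_slSubspaceStabilizer hbot htop)),
    Subgroup.index_map_eq _ hφ hker, Nat.odd_iff, hmod, ← Nat.odd_iff,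
    odd_choose_iff_forall_testBit]
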